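/- Let V be a finite set, let V̂ = {0} ∪ V, and let E⁺, E⁻ ⊆ binom(V,2). Define Ĉ := {X̂ ∈ S₊^{V̂} : X̂_{00} = 1, X̂_{0i} = X̂_{ii} for all i ∈ V, X̂_{ij} ≥ 0 for ij ∈ E⁺, X̂_{ij} ≤ 0 for ij ∈ E⁻}. Then X̂ ∈ Ĉ is a vertex of Ĉ if and only if rank(X̂) = 1. -/

import Mathlib

open Matrix

/-- The normal cone, within the space of symmetric matrices (with the trace inner
product), of a set `C` of symmetric matrices at a point `X`. -/
def normalConeM {ι : Type*} [Fintype ι] (C : Set (Matrix ι ι ℝ)) (X : Matrix ι ι ℝ) :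
    Set (Matrix ι ι ℝ) :=
  {c | c.IsSymm ∧ ∀ Y ∈ C, (c * Y).trace ≤ (c * X).trace}

/-- A point of a convex set of symmetric matrices is a vertex if its normal cone is
full-dimensional in the space `Sym(ι)` of symmetric matrices, whose dimension is
`card ι * (card ι + 1) / 2`. -/
def IsVertex {ι : Type*} [Fintype ι] (C : Set (Matrix ι ι ℝ)) (X : Matrix ι ι ℝ) : Prop :=
  X ∈ C ∧ Module.finrank ℝ (Submodule.span ℝ (normalConeM C X))
      = Fintype.card ι * (Fintype.card ι + 1) / 2

/-!
A matrix in `Ĉ` is the Gram matrix of a unit vector `v₀` (the handle) and vectors `vᵢ` with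
`⟨v₀, vᵢ⟩ = ‖vᵢ‖²`. Tilting the handle to a nearby vector and rescaling each `vᵢ` so that this
relation persists gives another matrix in `Ĉ` up to normalization: the scaling factors are positive,
so the entries of `X̂` indexed by `V` keep their signs. A curve in `Ĉ` through a vertex has zero
velocity, and for the curve that moves the handle in the direction `∑ wⱼ vⱼ` orthogonal to `v₀` the
velocity has diagonal entries `2 (X̂ w)ᵢ`. Hence at a vertex `(X̂ w)₀ = 0` implies `X̂ w = 0`, which
forces rank one.

Conversely, if `X̂ = x xᵀ`, then `x` is a 0/1 vector. The normal cone contains `-v vᵀ` for every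
`v ⊥ x` and the matrices of both signs of the affine constraints, and a symmetric matrix orthogonal
to all of these vanishes because no `xᵢ` equals `1/2`.
-/

open Filter Topology

section SymmetricMatrices

variable {ι R : Type*}

variable (ι R) in
/-- The space `Sym(ι)` of symmetric matrices, as a submodule of all square matrices. -/
def symmMatrices [Semiring R] : Submodule R (Matrix ι ι R) where
  carrier := {A | A.IsSymm}
  add_mem' hA hB := hA.add hB
  zero_mem' := isSymm_zero
  smul_mem' r _ hA := hA.smul r

variable (ι R) in
/-- Symmetric matrices as functions on unordered pairs of indices, used to compute their
dimension. -/
def symmMatricesEquivSym2 [Semiring R] : symmMatrices ι R ≃ₗ[R] (Sym2 ι → R) where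
  toFun A := Sym2.lift ⟨A.1, fun i j => A.2.apply j i⟩
  invFun f := ⟨of fun i j => f s(i, j), IsSymm.ext fun _ _ => congrArg f Sym2.eq_swap⟩
  map_add' A B := by ext ⟨i, j⟩; rfl
  map_smul' r A := by ext ⟨i, j⟩; rfl
  left_inv A := rfl
  right_inv f := by ext ⟨i, j⟩; rfl

theorem finrank_symmMatrices [Fintype ι] [Semiring R] [StrongRankCondition R] :
    Module.finrank R (symmMatrices ι R) = Fintype.card ι * (Fintype.card ι + 1) / 2 := by
  classical
  rw [(symmMatricesEquivSym2 ι R).finrank_eq, Module.finrank_fintype_fun_eq_card, Sym2.card,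
    Nat.choose_two_right, Nat.add_sub_cancel, Nat.mul_comm]

variable [Fintype ι]

variable (ι R) in
/-- The trace form `⟨A, B⟩ = tr (A B)` on square matrices. No transpose is needed since it is only
used on symmetric matrices, where it is the usual inner product. -/
def traceMulForm [CommSemiring R] : LinearMap.BilinForm R (Matrix ι ι R) :=
  (LinearMap.mul R (Matrix ι ι R)).compr₂ (traceLinearMap ι R R)

theorem traceMulForm_apply [CommSemiring R] (A B : Matrix ι ι R) :
    traceMulForm ι R A B = (A * B).trace :=
  rfl

theorem isRefl_traceMulForm [CommRing R] : (traceMulForm ι R).IsRefl := fun A B h => by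
  rwa [traceMulForm_apply, trace_mul_comm]

theorem eq_zero_of_isSymm_of_trace_mul_self {A : Matrix ι ι ℝ} (hA : A.IsSymm)
    (h : (A * A).trace = 0) : A = 0 := by
  rw [← trace_conjTranspose_mul_self_eq_zero_iff, conjTranspose_eq_transpose_of_trivial, hA.eq, h]

theorem mem_orthogonal_span_iff_trace_mul {S : Set (Matrix ι ι ℝ)} {Z : Matrix ι ι ℝ} :
    Z ∈ (traceMulForm ι ℝ).orthogonal (Submodule.span ℝ S) ↔ ∀ A ∈ S, (A * Z).trace = 0 := by
  change Submodule.span ℝ S ≤ LinearMap.ker ((traceMulForm ι ℝ).flip Z) ↔ _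
  exact Submodule.span_le

theorem span_eq_symmMatrices_iff {S : Set (Matrix ι ι ℝ)} (hS : ∀ A ∈ S, A.IsSymm) :
    Submodule.span ℝ S = symmMatrices ι ℝ ↔
      ∀ Z : Matrix ι ι ℝ, Z.IsSymm → (∀ A ∈ S, (A * Z).trace = 0) → Z = 0 := by
  simp_rw [← mem_orthogonal_span_iff_trace_mul]
  have hle : Submodule.span ℝ S ≤ symmMatrices ι ℝ := Submodule.span_le.2 hS
  constructor
  · intro hspan Z hZ hperp
    exact eq_zero_of_isSymm_of_trace_mul_self hZ (hperp Z (hspan ▸ hZ))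
  · intro hzero
    have hdisj : Disjoint (Submodule.span ℝ S)
        ((traceMulForm ι ℝ).orthogonal (Submodule.span ℝ S)) :=
      Submodule.disjoint_def.2 fun Z hZ hperp => hzero Z (hle hZ) hperp
    have hcompl := (LinearMap.BilinForm.isCompl_orthogonal_iff_disjoint isRefl_traceMulForm).2 hdisj
    have hbot : (traceMulForm ι ℝ).orthogonal (Submodule.span ℝ S) ⊓ symmMatrices ι ℝ = ⊥ :=
      (Submodule.eq_bot_iff _).2 fun Z hZ => hzero Z hZ.2 hZ.1
    have hmodular := sup_inf_assoc_of_le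
      ((traceMulForm ι ℝ).orthogonal (Submodule.span ℝ S)) hle
    rwa [hcompl.sup_eq_top, top_inf_eq, hbot, sup_bot_eq, eq_comm] at hmodular

end SymmetricMatrices

section Vertices

variable {ι : Type*} [Fintype ι] {C : Set (Matrix ι ι ℝ)} {X : Matrix ι ι ℝ}

theorem isVertex_iff_forall_eq_zero :
    IsVertex C X ↔ X ∈ C ∧
      ∀ Z : Matrix ι ι ℝ, Z.IsSymm → (∀ A ∈ normalConeM C X, (A * Z).trace = 0) → Z = 0 := by
  have hsymm : ∀ A ∈ normalConeM C X, A.IsSymm := fun A hA => hA.1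
  rw [IsVertex, ← span_eq_symmMatrices_iff hsymm, ← finrank_symmMatrices (R := ℝ)]
  exact and_congr_right' ⟨Submodule.eq_of_le_of_finrank_eq (Submodule.span_le.2 hsymm),
    fun h => by rw [h]⟩

theorem trace_mul_eq_zero_of_hasDerivAt {A Z : Matrix ι ι ℝ} {γ : ℝ → Matrix ι ι ℝ} {t₀ : ℝ}
    (hA : A ∈ normalConeM C (γ t₀)) (hγ : ∀ᶠ t in 𝓝 t₀, γ t ∈ C)
    (hZ : ∀ i j, HasDerivAt (fun t => γ t i j) (Z i j) t₀) : (A * Z).trace = 0 := by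
  have hmax : IsLocalMax (fun t => (A * γ t).trace) t₀ := hγ.mono fun t ht => hA.2 _ ht
  refine hmax.hasDerivAt_eq_zero ?_
  simp only [trace, diag_apply, mul_apply]
  exact .fun_sum fun i _ => .fun_sum fun j _ => (hZ j i).const_mul (A i j)

theorem IsVertex.deriv_apply_eq_zero {γ : ℝ → Matrix ι ι ℝ} {t₀ : ℝ} (hX : IsVertex C (γ t₀))
    (hC : ∀ Y ∈ C, Y.IsSymm) (hγ : ∀ᶠ t in 𝓝 t₀, γ t ∈ C)
    (hdiff : ∀ i j, DifferentiableAt ℝ (fun t => γ t i j) t₀) (i j : ι) :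
    deriv (fun t => γ t i j) t₀ = 0 := by
  let Z : Matrix ι ι ℝ := of fun i j => deriv (fun t => γ t i j) t₀
  have hsymm : Z.IsSymm := IsSymm.ext fun i j =>
    EventuallyEq.deriv_eq (hγ.mono fun t ht => (hC _ ht).apply i j)
  have hzero : Z = 0 := (isVertex_iff_forall_eq_zero.1 hX).2 Z hsymm fun A hA =>
    trace_mul_eq_zero_of_hasDerivAt hA hγ fun i j => (hdiff i j).hasDerivAt
  exact congrFun₂ hzero i j

theorem trace_vecMulVec_mul (v w : ι → ℝ) (A : Matrix ι ι ℝ) :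
    (vecMulVec v w * A).trace = w ⬝ᵥ A *ᵥ v := by
  rw [trace_mul_comm, mul_vecMulVec, trace_vecMulVec, dotProduct_comm]

theorem mem_normalConeM_of_forall_trace_mul_eq {A : Matrix ι ι ℝ} {r : ℝ} (hA : A.IsSymm)
    (hr : ∀ Y ∈ C, (A * Y).trace = r) (hX : X ∈ C) : A ∈ normalConeM C X :=
  ⟨hA, fun Y hY => ((hr Y hY).trans (hr X hX).symm).le⟩

theorem single_mem_normalConeM [DecidableEq ι] {i : ι} {r : ℝ} (hC : ∀ Y ∈ C, Y i i = r)
    (hX : X ∈ C) : single i i 1 ∈ normalConeM C X :=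
  mem_normalConeM_of_forall_trace_mul_eq (transpose_single _ _ _)
    (fun Y hY => by rw [trace_single_mul, one_smul, hC Y hY]) hX

theorem neg_vecMulVec_mem_normalConeM (hC : ∀ Y ∈ C, Y.PosSemidef) {v : ι → ℝ}
    (hv : X *ᵥ v = 0) : -vecMulVec v v ∈ normalConeM C X := by
  refine ⟨?_, fun Y hY => ?_⟩
  · rw [IsSymm, transpose_neg, transpose_vecMulVec]
  · simpa [trace_vecMulVec_mul, hv] using (hC Y hY).dotProduct_mulVec_nonneg v

theorem dotProduct_mulVec_eq_zero_of_isSymm {Z : Matrix ι ι ℝ} (hZ : Z.IsSymm)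
    {K : AddSubmonoid (ι → ℝ)} (hK : ∀ v ∈ K, v ⬝ᵥ Z *ᵥ v = 0) {v w : ι → ℝ} (hv : v ∈ K)
    (hw : w ∈ K) : v ⬝ᵥ Z *ᵥ w = 0 := by
  have hcomm : w ⬝ᵥ Z *ᵥ v = v ⬝ᵥ Z *ᵥ w := by
    rw [dotProduct_mulVec, ← mulVec_transpose, hZ.eq, dotProduct_comm]
  have hadd := hK (v + w) (add_mem hv hw)
  rw [mulVec_add, add_dotProduct, dotProduct_add, dotProduct_add, hK v hv, hK w hw, hcomm] at hadd
  linarith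

theorem dotProduct_mulVec_eq_zero_of_forall_normalConeM (hC : ∀ Y ∈ C, Y.PosSemidef)
    {Z : Matrix ι ι ℝ} (hZ : Z.IsSymm) (hperp : ∀ A ∈ normalConeM C X, (A * Z).trace = 0)
    {v w : ι → ℝ} (hv : X *ᵥ v = 0) (hw : X *ᵥ w = 0) : v ⬝ᵥ Z *ᵥ w = 0 := by
  refine dotProduct_mulVec_eq_zero_of_isSymm (K := (LinearMap.ker X.mulVecLin).toAddSubmonoid)
    hZ (fun u hu => ?_) hv hw
  simpa [trace_vecMulVec_mul] using hperp _ (neg_vecMulVec_mem_normalConeM hC hu)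

end Vertices

theorem rank_eq_one_iff_of_apply_ne_zero {m n K : Type*} [Fintype n] [Field K]
    {A : Matrix m n K} {i₀ : m} {j₀ : n} (h₀ : A i₀ j₀ ≠ 0) :
    A.rank = 1 ↔ A = (A i₀ j₀)⁻¹ • vecMulVec (A.col j₀) (A i₀) := by
  classical
  have hcol (j : n) : A.col j ∈ LinearMap.range A.mulVecLin :=
    ⟨Pi.single j 1, mulVec_single_one A j⟩
  have hne : (⟨A.col j₀, hcol j₀⟩ : LinearMap.range A.mulVecLin) ≠ 0 := fun h =>
    h₀ (congrFun (congrArg Subtype.val h) i₀)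
  constructor
  · intro hrank
    ext i j
    obtain ⟨c, hc⟩ := (finrank_eq_one_iff_of_nonzero' _ hne).1 hrank ⟨A.col j, hcol j⟩
    have hentry (i : m) : c * A i j₀ = A i j := congrFun (congrArg Subtype.val hc) i
    simp only [Matrix.smul_apply, vecMulVec_apply, col_apply, smul_eq_mul, ← hentry]
    field_simp
  · intro hA
    refine le_antisymm ?_ ?_
    · rw [hA, ← vecMulVec_smul]
      exact rank_vecMulVec_le _ _
    · have : Nontrivial (LinearMap.range A.mulVecLin) := nontrivial_of_ne _ _ hne
      exact Module.finrank_pos (R := K)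

theorem dotProduct_mulVec_self_nonneg {ι : Type*} [Fintype ι] {A : Matrix ι ι ℝ}
    (hA : A.PosSemidef) (v : ι → ℝ) : 0 ≤ v ⬝ᵥ A *ᵥ v := by
  simpa using hA.dotProduct_mulVec_nonneg v

theorem mulVec_apply_eq_zero_of_diag_eq_zero {ι : Type*} [Fintype ι]
    {A : Matrix ι ι ℝ} (hA : A.PosSemidef) {i : ι} (hi : A i i = 0) (w : ι → ℝ) :
    (A *ᵥ w) i = 0 := by
  classical
  have hcol : A *ᵥ Pi.single i 1 = 0 := (hA.dotProduct_mulVec_zero_iff _).1 (by simp [hi])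
  have hsymm := isHermitian_iff_isSymm.1 hA.isHermitian
  rw [← single_one_dotProduct i (A *ᵥ w), dotProduct_mulVec, ← mulVec_transpose, hsymm.eq, hcol,
    zero_dotProduct]

section ThetaBody

variable {V : Type*} {X : Matrix (Option V) (Option V) ℝ}

/-- The constraints on the lifted theta body without the sign conditions: `X̂` is positive
semidefinite, `X̂₀₀ = 1` and `X̂₀ᵢ = X̂ᵢᵢ`. The index `0` is `none`. -/
structure IsThetaLift (X : Matrix (Option V) (Option V) ℝ) : Prop where
  posSemidef : X.PosSemidef
  apply_none_none : X none none = 1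
  apply_none_some (i : V) : X none (some i) = X (some i) (some i)

/-- The set `Ĉ` of lifted matrices whose entries are nonnegative on `Ep` and nonpositive
on `Em`. -/
def signedThetaBody (Ep Em : Set (V × V)) : Set (Matrix (Option V) (Option V) ℝ) :=
  {X | X.PosSemidef ∧ X none none = 1 ∧
    (∀ i : V, X none (some i) = X (some i) (some i)) ∧
    (∀ e ∈ Ep, 0 ≤ X (some e.1) (some e.2)) ∧
    (∀ e ∈ Em, X (some e.1) (some e.2) ≤ 0)}

theorem isThetaLift_of_mem_signedThetaBody {Ep Em : Set (V × V)} (hX : X ∈ signedThetaBody Ep Em) :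
    IsThetaLift X :=
  ⟨hX.1, hX.2.1, hX.2.2.1⟩

namespace IsThetaLift

theorem isSymm (hX : IsThetaLift X) : X.IsSymm :=
  isHermitian_iff_isSymm.1 hX.posSemidef.isHermitian

theorem apply_some_none (hX : IsThetaLift X) (i : V) : X (some i) none = X (some i) (some i) := by
  rw [← hX.apply_none_some, hX.isSymm.apply]

variable [Fintype V]

theorem rank_eq_one_iff (hX : IsThetaLift X) :
    X.rank = 1 ↔ X = vecMulVec (X none) (X none) := by
  have hcol : X.col none = X none := funext fun i => hX.isSymm.apply none i
  rw [rank_eq_one_iff_of_apply_ne_zero (by simp [hX.apply_none_none] : X none none ≠ 0),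
    hX.apply_none_none, inv_one, one_smul, hcol]

end IsThetaLift

section RankOne

variable {C : Set (Matrix (Option V) (Option V) ℝ)}

theorem eq_zero_of_apply_some_some_eq_mul_add_mul {Z : Matrix (Option V) (Option V) ℝ}
    (hZ : Z.IsSymm) (h00 : Z none none = 0) (h0i : ∀ i, Z none (some i) = Z (some i) (some i))
    {x : V → ℝ} (hx : ∀ i, x i ≠ 1 / 2)
    (hij : ∀ i j, Z (some i) (some j) = x j * Z none (some i) + x i * Z none (some j)) :
    Z = 0 := by
  have hdiag (i : V) : Z (some i) (some i) = 0 := by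
    have hfactor : (x i - 1 / 2) * Z (some i) (some i) = 0 := by
      have h := hij i i
      rw [h0i] at h
      linear_combination -h / 2
    exact (mul_eq_zero.1 hfactor).resolve_left (sub_ne_zero.2 (hx i))
  have hrow (i : V) : Z none (some i) = 0 := (h0i i).trans (hdiag i)
  ext (_ | i) (_ | j)
  · exact h00
  · exact hrow j
  · exact (hZ.apply none (some i)).trans (hrow i)
  · simp [hij, hrow]

variable [Fintype V]

theorem single_add_single_sub_mem_normalConeM [DecidableEq V] (hC : ∀ Y ∈ C, IsThetaLift Y)
    (hX : X ∈ C) (i : V) :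
    single none (some i) 1 + single (some i) none 1 - single (some i) (some i) 2 ∈
      normalConeM C X := by
  refine mem_normalConeM_of_forall_trace_mul_eq (r := 0) ?_ (fun Y hY => ?_) hX
  · simp only [IsSymm, transpose_sub, transpose_add, transpose_single, add_comm]
  · simp only [Matrix.sub_mul, Matrix.add_mul, trace_sub, trace_add, trace_single_mul, smul_eq_mul,
      (hC Y hY).apply_some_none, (hC Y hY).apply_none_some]
    ring

theorem isVertex_of_eq_vecMulVec (hC : ∀ Y ∈ C, IsThetaLift Y) (hX : X ∈ C)
    (hrank : X = vecMulVec (X none) (X none)) : IsVertex C X := by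
  classical
  refine isVertex_iff_forall_eq_zero.2 ⟨hX, fun Z hZ hperp => ?_⟩
  have hlift := hC X hX
  let x : V → ℝ := fun i => X none (some i)
  let v : V → Option V → ℝ := fun i => Pi.single (some i) 1 - x i • Pi.single none 1
  have hhalf (i : V) : x i ≠ 1 / 2 := by
    have hsq : x i * x i = x i :=
      (congrFun₂ hrank (some i) (some i)).symm.trans (hlift.apply_none_some i).symm
    intro h
    norm_num [h] at hsq
  have hker (i : V) : X *ᵥ v i = 0 := by
    rw [hrank, vecMulVec_mulVec]
    simp [v, x, hlift.apply_none_none]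
  have hZ00 : Z none none = 0 := by
    simpa [trace_single_mul] using
      hperp _ (single_mem_normalConeM (fun Y hY => (hC Y hY).apply_none_none) hX)
  have hsymm (i : V) : Z (some i) none = Z none (some i) := hZ.apply _ _
  have hZ0i (i : V) : Z none (some i) = Z (some i) (some i) := by
    have h := hperp _ (single_add_single_sub_mem_normalConeM hC hX i)
    simp only [Matrix.sub_mul, Matrix.add_mul, trace_sub, trace_add, trace_single_mul,
      smul_eq_mul, hsymm] at h
    linarith
  have hZij (i j : V) :
      Z (some i) (some j) = x j * Z none (some i) + x i * Z none (some j) := by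
    have h := dotProduct_mulVec_eq_zero_of_forall_normalConeM (fun Y hY => (hC Y hY).posSemidef)
      hZ hperp (hker i) (hker j)
    simp only [v, mulVec_sub, mulVec_smul, mulVec_single_one, sub_dotProduct, dotProduct_sub,
      smul_dotProduct, dotProduct_smul, single_one_dotProduct, col_apply, smul_eq_mul, hZ00,
      hsymm] at h
    linarith
  exact eq_zero_of_apply_some_some_eq_mul_add_mul hZ hZ00 hZ0i hhalf hZij

end RankOne

section HandleMoves

variable [DecidableEq V]

/-- The rows are the coefficients, over Gram vectors `(vⱼ)` of `X`, of the vectors obtained by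
replacing the handle `v₀` with `∑ uⱼ vⱼ` and rescaling `vᵢ` to `sᵢ vᵢ`. -/
def handleFrame (u : Option V → ℝ) (s : V → ℝ) : Matrix (Option V) (Option V) ℝ
  | none => u
  | some i => Pi.single (some i) (s i)

variable [Fintype V]

/-- The Gram matrix of the vectors described by `handleFrame u s`, divided by the squared norm of
the new handle. -/
noncomputable def moveHandle (X : Matrix (Option V) (Option V) ℝ) (u : Option V → ℝ) (s : V → ℝ) :
    Matrix (Option V) (Option V) ℝ :=
  (u ⬝ᵥ X *ᵥ u)⁻¹ • (handleFrame u s * X * (handleFrame u s)ᵀ)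

theorem moveHandle_apply (u : Option V → ℝ) (s : V → ℝ) (i j : Option V) :
    moveHandle X u s i j =
      (u ⬝ᵥ X *ᵥ u)⁻¹ * (handleFrame u s i ⬝ᵥ X *ᵥ handleFrame u s j) := by
  rw [moveHandle, Matrix.smul_apply, smul_eq_mul, mul_mul_apply]
  rfl

theorem moveHandle_apply_none_none (u : Option V → ℝ) (s : V → ℝ) :
    moveHandle X u s none none = (u ⬝ᵥ X *ᵥ u)⁻¹ * (u ⬝ᵥ X *ᵥ u) :=
  moveHandle_apply u s none none

theorem moveHandle_apply_some_none (u : Option V → ℝ) (s : V → ℝ) (i : V) :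
    moveHandle X u s (some i) none = (u ⬝ᵥ X *ᵥ u)⁻¹ * (s i * (X *ᵥ u) (some i)) := by
  simp [moveHandle_apply, handleFrame]

theorem moveHandle_apply_some_some (u : Option V → ℝ) (s : V → ℝ) (i j : V) :
    moveHandle X u s (some i) (some j) =
      (u ⬝ᵥ X *ᵥ u)⁻¹ * (s i * s j * X (some i) (some j)) := by
  rw [moveHandle_apply, mul_assoc (s i), mul_left_comm (s i)]
  simp [handleFrame]

theorem moveHandle_single_none (hX : X none none = 1) : moveHandle X (Pi.single none 1) 1 = X := by
  have hframe : handleFrame (Pi.single none 1) (1 : V → ℝ) = 1 := by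
    ext (_ | i) j <;> simp [handleFrame, one_apply, Pi.single_apply, eq_comm]
  simp [moveHandle, hframe, hX]

theorem posSemidef_moveHandle (hX : X.PosSemidef) (u : Option V → ℝ) (s : V → ℝ) :
    (moveHandle X u s).PosSemidef := by
  have hgram := hX.mul_mul_conjTranspose_same (handleFrame u s)
  rw [conjTranspose_eq_transpose_of_trivial] at hgram
  exact hgram.smul (inv_nonneg.2 (dotProduct_mulVec_self_nonneg hX u))

theorem moveHandle_mem_signedThetaBody {Ep Em : Set (V × V)} (hX : X ∈ signedThetaBody Ep Em)
    {u : Option V → ℝ} {s : V → ℝ} (hu : u ⬝ᵥ X *ᵥ u ≠ 0) (hs : ∀ i, 0 ≤ s i)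
    (hus : ∀ i, (X *ᵥ u) (some i) = s i * X (some i) (some i)) :
    moveHandle X u s ∈ signedThetaBody Ep Em := by
  have hpsd := posSemidef_moveHandle hX.1 u s
  have hnorm : 0 ≤ (u ⬝ᵥ X *ᵥ u)⁻¹ :=
    inv_nonneg.2 (dotProduct_mulVec_self_nonneg hX.1 u)
  obtain ⟨-, -, -, hpos, hneg⟩ := hX
  refine ⟨hpsd, ?_, fun i => ?_, fun e he => ?_, fun e he => ?_⟩
  · rw [moveHandle_apply_none_none, inv_mul_cancel₀ hu]
  · rw [← (isHermitian_iff_isSymm.1 hpsd.isHermitian).apply, moveHandle_apply_some_none,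
      moveHandle_apply_some_some, hus, mul_assoc (s i)]
  · rw [moveHandle_apply_some_some]
    exact mul_nonneg hnorm (mul_nonneg (mul_nonneg (hs _) (hs _)) (hpos e he))
  · rw [moveHandle_apply_some_some]
    exact mul_nonpos_of_nonneg_of_nonpos hnorm
      (mul_nonpos_of_nonneg_of_nonpos (mul_nonneg (hs _) (hs _)) (hneg e he))

end HandleMoves

section Tilting

variable [Fintype V]

/-- The rate at which `vᵢ` is rescaled when the handle moves in the direction `∑ wⱼ vⱼ`. If
`X̂ᵢᵢ = 0`, then `vᵢ = 0` and the value of the rate, `0`, is immaterial. -/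
noncomputable def tiltRate (X : Matrix (Option V) (Option V) ℝ) (w : Option V → ℝ) (i : V) : ℝ :=
  (X *ᵥ w) (some i) / X (some i) (some i)

theorem IsThetaLift.tiltRate_mul_diag (hX : IsThetaLift X) (w : Option V → ℝ) (i : V) :
    tiltRate X w i * X (some i) (some i) = (X *ᵥ w) (some i) :=
  div_mul_cancel_of_imp fun hi => mulVec_apply_eq_zero_of_diag_eq_zero hX.posSemidef hi w

variable [DecidableEq V]

/-- The curve through `X` that moves the handle `v₀` in the direction `∑ wⱼ vⱼ`. -/
noncomputable def tiltCurve (X : Matrix (Option V) (Option V) ℝ) (w : Option V → ℝ) (t : ℝ) :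
    Matrix (Option V) (Option V) ℝ :=
  moveHandle X (Pi.single none 1 + t • w) (1 + t • tiltRate X w)

namespace IsThetaLift

theorem tiltCurve_zero (hX : IsThetaLift X) (w : Option V → ℝ) : tiltCurve X w 0 = X := by
  simp [tiltCurve, moveHandle_single_none hX.apply_none_none]

theorem tilted_dotProduct_mulVec (hX : IsThetaLift X) {w : Option V → ℝ}
    (hw : (X *ᵥ w) none = 0) (t : ℝ) :
    (Pi.single none 1 + t • w) ⬝ᵥ X *ᵥ (Pi.single none 1 + t • w) =
      1 + t ^ 2 * (w ⬝ᵥ X *ᵥ w) := by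
  have hw' : w ⬝ᵥ X.col none = 0 := by
    rw [← hw, dotProduct_comm]
    exact congrArg (· ⬝ᵥ w) (funext fun i => hX.isSymm.apply none i)
  simp only [mulVec_add, mulVec_smul, mulVec_single_one, add_dotProduct, dotProduct_add,
    smul_dotProduct, dotProduct_smul, single_one_dotProduct, col_apply, smul_eq_mul,
    hX.apply_none_none, hw, hw']
  ring

theorem tilted_dotProduct_mulVec_pos (hX : IsThetaLift X) {w : Option V → ℝ}
    (hw : (X *ᵥ w) none = 0) (t : ℝ) :
    0 < (Pi.single none 1 + t • w) ⬝ᵥ X *ᵥ (Pi.single none 1 + t • w) := by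
  have hquad := dotProduct_mulVec_self_nonneg hX.posSemidef w
  rw [hX.tilted_dotProduct_mulVec hw]
  positivity

theorem differentiableAt_tiltCurve_apply (hX : IsThetaLift X) {w : Option V → ℝ}
    (hw : (X *ᵥ w) none = 0) (i j : Option V) (t : ℝ) :
    DifferentiableAt ℝ (fun t => tiltCurve X w t i j) t := by
  have hframe (k l : Option V) : Differentiable ℝ fun t : ℝ =>
      handleFrame (Pi.single none 1 + t • w) (1 + t • tiltRate X w) k l := by
    cases k <;> simp only [handleFrame, Pi.single_apply, Pi.add_apply, Pi.smul_apply]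
    · fun_prop
    · split_ifs <;> fun_prop
  simp only [tiltCurve, moveHandle_apply]
  refine .mul (.inv ?_ (hX.tilted_dotProduct_mulVec_pos hw t).ne') ?_
  · simp only [hX.tilted_dotProduct_mulVec hw]
    fun_prop
  · simp only [dotProduct, mulVec]
    fun_prop

theorem hasDerivAt_tiltCurve_diag (hX : IsThetaLift X) {w : Option V → ℝ}
    (hw : (X *ᵥ w) none = 0) (i : V) :
    HasDerivAt (fun t => tiltCurve X w t (some i) (some i)) (2 * (X *ᵥ w) (some i)) 0 := by
  set x := X (some i) (some i)
  set r := tiltRate X w i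
  have hnorm : HasDerivAt (fun t : ℝ => 1 + t ^ 2 * (w ⬝ᵥ X *ᵥ w)) 0 0 := by
    simpa using ((hasDerivAt_pow 2 (0 : ℝ)).mul_const (w ⬝ᵥ X *ᵥ w)).const_add 1
  have hscale : HasDerivAt (fun t : ℝ => 1 + t * r) r 0 := (hasDerivAt_mul_const r).const_add 1
  have hentry (t : ℝ) : tiltCurve X w t (some i) (some i) =
      (1 + t ^ 2 * (w ⬝ᵥ X *ᵥ w))⁻¹ * ((1 + t * r) * (1 + t * r) * x) := by
    rw [tiltCurve, moveHandle_apply_some_some, hX.tilted_dotProduct_mulVec hw]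
    rfl
  have hderiv := (hnorm.fun_inv (by simp)).fun_mul ((hscale.fun_mul hscale).mul_const x)
  simp only [hentry]
  refine hderiv.congr_deriv ?_
  rw [← hX.tiltRate_mul_diag]
  simp only [x, r]
  ring

end IsThetaLift

theorem eventually_tiltCurve_mem {Ep Em : Set (V × V)} (hX : X ∈ signedThetaBody Ep Em)
    {w : Option V → ℝ} (hw : (X *ᵥ w) none = 0) :
    ∀ᶠ t in 𝓝 0, tiltCurve X w t ∈ signedThetaBody Ep Em := by
  have hlift := isThetaLift_of_mem_signedThetaBody hX
  have hscale : ∀ᶠ t in 𝓝 (0 : ℝ), ∀ i, 0 < 1 + t * tiltRate X w i :=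
    eventually_all.2 fun i => ContinuousAt.eventually_lt (by fun_prop) (by fun_prop) (by simp)
  filter_upwards [hscale] with t ht
  refine moveHandle_mem_signedThetaBody hX ?_ (fun i => (ht i).le) fun i => ?_
  · exact (hlift.tilted_dotProduct_mulVec_pos hw t).ne'
  · simp [mulVec_add, mulVec_smul, add_mul, mul_assoc, hlift.tiltRate_mul_diag,
      hlift.apply_some_none]

end Tilting

section VertexToRankOne

variable [Fintype V] {Ep Em : Set (V × V)}

theorem IsVertex.mulVec_eq_zero (hX : IsVertex (signedThetaBody Ep Em) X)
    {w : Option V → ℝ} (hw : (X *ᵥ w) none = 0) : X *ᵥ w = 0 := by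
  classical
  have hlift := isThetaLift_of_mem_signedThetaBody hX.1
  ext (_ | i)
  · exact hw
  · have hvelocity : deriv (fun t => tiltCurve X w t (some i) (some i)) 0 = 0 :=
      IsVertex.deriv_apply_eq_zero ((hlift.tiltCurve_zero w).symm ▸ hX)
        (fun Y hY => (isThetaLift_of_mem_signedThetaBody hY).isSymm)
        (eventually_tiltCurve_mem hX.1 hw)
        (fun i j => hlift.differentiableAt_tiltCurve_apply hw i j 0) (some i) (some i)
    simpa [(hlift.hasDerivAt_tiltCurve_diag hw i).deriv] using hvelocity

theorem IsVertex.eq_vecMulVec (hX : IsVertex (signedThetaBody Ep Em) X) :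
    X = vecMulVec (X none) (X none) := by
  classical
  have hlift := isThetaLift_of_mem_signedThetaBody hX.1
  ext i j
  have hkernel : X *ᵥ (Pi.single j 1 - X none j • Pi.single none 1) = 0 :=
    hX.mulVec_eq_zero (by simp [mulVec_sub, mulVec_smul, hlift.apply_none_none])
  have hentry : X i j - X none j * X i none = 0 := by
    simpa [mulVec_sub, mulVec_smul] using congrFun hkernel i
  rw [vecMulVec_apply, ← hlift.isSymm.apply none i, mul_comm]
  exact sub_eq_zero.1 hentry

end VertexToRankOne

end ThetaBody

theorem lifted_theta_variant_vertex_iff_rank_one {V : Type*} [Fintype V] [DecidableEq V]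
    (Ep Em : Set (V × V)) (hEp : ∀ e ∈ Ep, e.1 ≠ e.2) (hEm : ∀ e ∈ Em, e.1 ≠ e.2)
    (Ch : Set (Matrix (Option V) (Option V) ℝ))
    (hCh : Ch = {X | X.PosSemidef ∧ X none none = 1 ∧
      (∀ i : V, X none (some i) = X (some i) (some i)) ∧
      (∀ e ∈ Ep, 0 ≤ X (some e.1) (some e.2)) ∧
      (∀ e ∈ Em, X (some e.1) (some e.2) ≤ 0)})
    (X : Matrix (Option V) (Option V) ℝ) (hX : X ∈ Ch) :
    IsVertex Ch X ↔ X.rank = 1 := by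
  subst hCh
  change X ∈ signedThetaBody Ep Em at hX
  change IsVertex (signedThetaBody Ep Em) X ↔ X.rank = 1
  rw [(isThetaLift_of_mem_signedThetaBody hX).rank_eq_one_iff]
  exact ⟨fun hvertex => hvertex.eq_vecMulVec,
    isVertex_of_eq_vecMulVec (fun _ => isThetaLift_of_mem_signedThetaBody) hX⟩
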